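/- arXiv:0902.3126 — 3 statements merged into one kernel-verified Lean document; each statement's English description precedes it below -/
import Mathlib

section
/- Let (M, d) be a metric space, let C be a real number with 0 < C < 1, let ε > 0, and let S ⊆ M be a finite nonempty ε-net. Then for all x, y ∈ M with d(x,y) ≥ 2ε/C, one has (1 − C)·d(x,y) ≤ ‖ι_S(x) − ι_S(y)‖_∞ ≤ d(x,y); that is, the distance-functions imbedding ι_S is (1−C)-bi-Lipschitz at scales large compared with the mesh of the net. -/
/-- For a finite subset `S` of a metric space `M`, the imbedding of `M` into
`ℓ∞(S)` (functions `S → ℝ` with the sup norm) by distance functions from the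
points of `S`. -/
noncomputable def kuratowskiFin {M : Type*} [MetricSpace M] (S : Finset M) (x : M) :
    S → ℝ :=
  fun z => dist x (z : M)

section DistanceFunctions

variable {M : Type*} [PseudoMetricSpace M]

lemma dist_sub_two_mul_dist_le_abs_dist_sub (x y z : M) :
    dist x y - 2 * dist x z ≤ |dist x z - dist y z| := calc
  dist x y - 2 * dist x z ≤ dist y z - dist x z := by linarith [dist_triangle_right x y z]
  _ ≤ |dist x z - dist y z| := (le_abs_self _).trans_eq (abs_sub_comm _ _)

lemma bddAbove_range_abs_dist_sub (S : Set M) (x y : M) :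
    BddAbove (Set.range fun z : S ↦ |dist x z - dist y z|) :=
  ⟨dist x y, Set.forall_mem_range.2 fun z ↦ abs_dist_sub_le x y z⟩

lemma iSup_abs_dist_sub_le_dist (S : Set M) (x y : M) :
    ⨆ z : S, |dist x z - dist y z| ≤ dist x y :=
  Real.iSup_le (fun z ↦ abs_dist_sub_le x y z) dist_nonneg

lemma dist_sub_two_mul_infDist_le_iSup_abs_dist_sub {S : Set M} (hS : S.Nonempty) (x y : M) :
    dist x y - 2 * Metric.infDist x S ≤ ⨆ z : S, |dist x z - dist y z| := by
  suffices (dist x y - ⨆ z : S, |dist x z - dist y z|) / 2 ≤ Metric.infDist x S by linarith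
  refine (Metric.le_infDist hS).2 fun {z} hz ↦ ?_
  have le_sup : |dist x z - dist y z| ≤ ⨆ z : S, |dist x z - dist y z| :=
    le_ciSup (bddAbove_range_abs_dist_sub S x y) ⟨z, hz⟩
  linarith [dist_sub_two_mul_dist_le_abs_dist_sub x y z]

/-- When `S` is infinite the distance functions need not be bounded, but their differences are;
the supremum here is the sup norm of such a difference. -/
theorem kuratowskiFin_biLipschitz_at_large_scales_general {C ε : ℝ} (hC : 0 < C) {S : Set M}
    (hS : S.Nonempty) {x y : M} (hx : Metric.infDist x S ≤ ε) (hxy : 2 * ε / C ≤ dist x y) :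
    (1 - C) * dist x y ≤ ⨆ z : S, |dist x z - dist y z| ∧
      ⨆ z : S, |dist x z - dist y z| ≤ dist x y := by
  refine ⟨?_, iSup_abs_dist_sub_le_dist S x y⟩
  have two_mul_le : 2 * ε ≤ dist x y * C := (div_le_iff₀ hC).1 hxy
  calc
    (1 - C) * dist x y ≤ dist x y - 2 * Metric.infDist x S := by linarith
    _ ≤ ⨆ z : S, |dist x z - dist y z| := dist_sub_two_mul_infDist_le_iSup_abs_dist_sub hS x y

end DistanceFunctions

lemma norm_kuratowskiFin_sub {M : Type*} [MetricSpace M] (S : Finset M) (x y : M) :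
    ‖kuratowskiFin S x - kuratowskiFin S y‖ = ⨆ z : (S : Set M), |dist x z - dist y z| := by
  apply le_antisymm
  · refine (pi_norm_le_iff_of_nonneg (Real.iSup_nonneg fun _ ↦ abs_nonneg _)).2 fun z ↦ ?_
    exact le_ciSup (bddAbove_range_abs_dist_sub (S : Set M) x y) z
  · exact Real.iSup_le (norm_le_pi_norm (kuratowskiFin S x - kuratowskiFin S y)) (norm_nonneg _)

/-- If `S` is a finite nonempty `ε`-net in a metric space `M`, `0 < C < 1`, then for all
points `x, y` with `dist x y ≥ 2ε/C`, the imbedding of `M` into `ℓ∞(S)` by distance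
functions from the points of `S` satisfies
`(1 − C)·dist x y ≤ ‖ι_S x − ι_S y‖_∞ ≤ dist x y`:
it is `(1−C)`-bi-Lipschitz at scales large compared with the mesh of the net. -/
theorem kuratowskiFin_biLipschitz_at_large_scales {M : Type*} [MetricSpace M]
    {C : ℝ} (hC0 : 0 < C) (hC1 : C < 1) {ε : ℝ} (hε : 0 < ε) (S : Finset M)
    (hS : S.Nonempty) (hnet : ∀ x : M, ∃ z ∈ S, dist x z ≤ ε)
    (x y : M) (hxy : 2 * ε / C ≤ dist x y) :
    (1 - C) * dist x y ≤ ‖kuratowskiFin S x - kuratowskiFin S y‖ ∧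
      ‖kuratowskiFin S x - kuratowskiFin S y‖ ≤ dist x y := by
  obtain ⟨z, hz, hxz⟩ := hnet x
  simpa only [norm_kuratowskiFin_sub] using kuratowskiFin_biLipschitz_at_large_scales_general
    hC0 hS ((Metric.infDist_le_dist_of_mem hz).trans hxz) hxy
end

section
/- Nonstandard characterization of continuity: let f : ℝ → ℝ and a ∈ ℝ. Then f is continuous at a if and only if for every hyperreal x ∈ ℝ* that is infinitely close to a (i.e. IsSt x a), the value f*(x) of the natural extension of f is infinitely close to f(a) (i.e. IsSt (f*(x)) (f(a))). -/
open Hyperreal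

/-- The natural hyperreal extension `f*` of a real function `f`, induced termwise
on germs. -/
noncomputable def natExt (f : ℝ → ℝ) : ℝ* → ℝ* := Filter.Germ.map f

/-!
Composition of limits gives the forward direction. Conversely, if `f` does not tend to `l'` along a
countably generated filter `l`, there are `s ∈ l'` and a sequence converging to `l` all of whose
images under `f` avoid `s`. The germ of this sequence tends to `l`, while its image under `f*`
cannot tend to `l'`.
-/

section Germ

open Filter Topology

variable {ι X Y : Type*} {F : Filter ι} {f : X → Y}

theorem germ_map_tendsto {l : Filter X} {l' : Filter Y} {x : Germ F X}
    (hf : Tendsto f l l') (hx : x.Tendsto l) : (x.map f).Tendsto l' := by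
  induction x using Germ.inductionOn with
  | h u => exact hf.comp hx

theorem tendsto_of_forall_germ_map_tendsto [F.NeBot] {g : ι → ℕ} (hg : Tendsto g F atTop)
    {l : Filter X} [l.IsCountablyGenerated] {l' : Filter Y}
    (h : ∀ x : Germ F X, x.Tendsto l → (x.map f).Tendsto l') : Tendsto f l l' := by
  by_contra hf
  obtain ⟨s, hs, hfs⟩ := not_tendsto_iff_exists_frequently_notMem.1 hf
  obtain ⟨u, hu, hus⟩ := exists_seq_forall_of_frequently hfs
  have hfu : Tendsto (f ∘ u ∘ g) F l' := h ↑(u ∘ g) (hu.comp hg)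
  obtain ⟨i, hi⟩ := (hfu.eventually_mem hs).exists
  exact hus (g i) hi

/- For an ultrafilter `F`, a map `g` tending to infinity along `F` exists exactly when `F` is
countably incomplete. -/
theorem continuousAt_iff_natExt_isSt_general [TopologicalSpace X] [TopologicalSpace Y] [F.NeBot]
    {g : ι → ℕ} (hg : Tendsto g F atTop) {a : X} [(𝓝 a).IsCountablyGenerated] :
    ContinuousAt f a ↔ ∀ x : Germ F X, x.Tendsto (𝓝 a) → (x.map f).Tendsto (𝓝 (f a)) :=
  ⟨fun hf _ => germ_map_tendsto hf, tendsto_of_forall_germ_map_tendsto hg⟩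

end Germ

/-- Nonstandard characterization of continuity at a point: `f : ℝ → ℝ` is continuous
at `a` if and only if for every hyperreal `x` infinitely close to `a`, the natural
extension `f*` sends `x` to a hyperreal infinitely close to `f a`. -/
theorem continuousAt_iff_natExt_isSt (f : ℝ → ℝ) (a : ℝ) :
    ContinuousAt f a ↔ ∀ x : ℝ*, IsSt x a → IsSt (natExt f x) (f a) := by
  simp only [isSt_iff_tendsto]
  exact continuousAt_iff_natExt_isSt_general (Filter.tendsto_id'.2 Nat.hyperfilter_le_atTop)
end

section
/- Nonstandard characterization of the derivative: let f : ℝ → ℝ, a ∈ ℝ, and L ∈ ℝ. Then f is differentiable at a with derivative L if and only if for every nonzero infinitesimal hyperreal ε, the difference quotient (f*(a + ε) − f(a)) / ε is infinitely close to L (i.e. IsSt ((f*(a + ε) − f(a)) / ε) L), where f* is the natural extension of f to the hyperreals; in particular f′(a) = st((f*(a+ε) − f(a))/ε) independently of the choice of nonzero infinitesimal ε. -/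
open Hyperreal

/-!
Let `φ ≤ atTop` be a proper filter on `ℕ`. A sequence tending to `l` along `atTop` also does so
along `φ`, so its germ at `φ` is a generalized point infinitely close to `l`. When `l` is countably
generated, a failure of `Tendsto g l m` is witnessed by a sequence all of whose terms avoid a fixed
member of `m`, and such a sequence still fails to tend to `m` along `φ`. Limits along `l` can
therefore be tested on germs at `φ`; the derivative is the case of the difference quotient
and `l = 𝓝[≠] 0`.
-/

open Filter Topology

theorem tendsto_iff_forall_germ_tendsto {α β : Type*} {φ : Filter ℕ} [φ.NeBot] (hφ : φ ≤ atTop)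
    {l : Filter α} [l.IsCountablyGenerated] {m : Filter β} {g : α → β} :
    Tendsto g l m ↔ ∀ x : Germ φ α, x.Tendsto l → (x.map g).Tendsto m := by
  constructor
  · intro hg x hx
    induction x using Germ.inductionOn with | _ u
    exact hg.comp hx
  · intro h
    by_contra hg
    obtain ⟨s, hs, hfreq⟩ := not_tendsto_iff_exists_frequently_notMem.1 hg
    obtain ⟨u, hu, hus⟩ := exists_seq_forall_of_frequently hfreq
    have hgu : Tendsto (g ∘ u) φ m := h u (hu.mono_left hφ)
    obtain ⟨n, hn⟩ := (hgu.eventually_mem hs).exists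
    exact hus n hn

theorem germ_tendsto_nhdsNE_iff {ι X : Type*} [TopologicalSpace X] {φ : Ultrafilter ι}
    {x : Germ (φ : Filter ι) X} {a : X} :
    x.Tendsto (𝓝[≠] a) ↔ x.Tendsto (𝓝 a) ∧ x ≠ a := by
  induction x using Germ.inductionOn with | _ u
  have hne : (u : Germ (φ : Filter ι) X) ≠ a ↔ ∀ᶠ i in φ, u i ≠ a :=
    (not_congr Germ.coe_eq).trans Ultrafilter.eventually_not.symm
  rw [hne]
  exact tendsto_nhdsWithin_iff

theorem tendsto_nhdsNE_iff_natExt_tendsto {g : ℝ → ℝ} {a : ℝ} {m : Filter ℝ} :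
    Tendsto g (𝓝[≠] a) m ↔
      ∀ x : ℝ*, x.Tendsto (𝓝 a) → x ≠ a → (natExt g x).Tendsto m := by
  refine (tendsto_iff_forall_germ_tendsto Nat.hyperfilter_le_atTop).trans
    (forall_congr' fun x => ?_)
  rw [germ_tendsto_nhdsNE_iff, and_imp]
  rfl

theorem natExt_differenceQuotient (f : ℝ → ℝ) (a : ℝ) (e : ℝ*) :
    natExt (fun t => (f (a + t) - f a) / t) e = (natExt f (a + e) - f a) / e := by
  obtain ⟨u, rfl⟩ := ofSeq_surjective e
  rfl

theorem hasDerivAt_iff_tendsto_differenceQuotient {𝕜 : Type*} [NontriviallyNormedField 𝕜]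
    {f : 𝕜 → 𝕜} {a L : 𝕜} :
    HasDerivAt f L a ↔ Tendsto (fun t => (f (a + t) - f a) / t) (𝓝[≠] 0) (𝓝 L) := by
  simp only [hasDerivAt_iff_tendsto_slope_zero, smul_eq_mul, inv_mul_eq_div]

/-- Nonstandard characterization of the derivative: `f : ℝ → ℝ` has derivative `L`
at `a` if and only if for every nonzero infinitesimal `e`, the difference quotient
`(f*(a + e) − f(a)) / e` is infinitely close to `L`.  (In particular
`f′(a) = st ((f*(a+e) − f(a))/e)` independently of the choice of nonzero
infinitesimal `e`.) -/
theorem hasDerivAt_iff_natExt_isSt (f : ℝ → ℝ) (a L : ℝ) :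
    HasDerivAt f L a ↔
      ∀ e : ℝ*, Infinitesimal e → e ≠ 0 →
        IsSt ((natExt f ((a : ℝ*) + e) - (f a : ℝ*)) / e) L := by
  rw [hasDerivAt_iff_tendsto_differenceQuotient, tendsto_nhdsNE_iff_natExt_tendsto]
  simp only [natExt_differenceQuotient, coe_zero, Infinitesimal, isSt_iff_tendsto]
end
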